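/- Let S be a nonnegative random variable with E[S] < ∞ and E[S²] < ∞, and fix a job size x > 0. If Var(S) > ( x + E[S] )², equivalently CV_S > 1 + x/E[S], then there exists a resetting rate r > 0 for which the mean service time under Poissonian resetting is strictly smaller than without resetting: ( e^{r·x} − S̃(r) ) / ( r·S̃(r) ) < x + E[S]. -/

import Mathlib

open MeasureTheory ProbabilityTheory Real

/-!
Resetting the total service time `T = x + S` gives the mean `(1 - T̃(r)) / (r T̃(r))`, where `T̃` is
the Laplace transform of `T`. For `T ≥ 0` with a finite second moment, dominated convergence gives
`T̃(r) = 1 - r E[T] + r² E[T²] / 2 + o(r²)` as `r → 0⁺`, and substituting this expansion shows that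
the mean equals `E[T] + (r / 2) (E[T]² - Var T) + o(r)`. Hence slow resetting helps as soon as
`Var T > E[T]²`; translating by `x` leaves the variance unchanged and adds `x` to the mean.
-/

section SecondOrderExpansion

open Filter Topology

lemma exp_le_quadratic_of_nonpos {t : ℝ} (ht : t ≤ 0) : exp t ≤ 1 + t + t ^ 2 / 2 := by
  have hquad : 0 ≤ 1 + t + t ^ 2 / 2 := by nlinarith [sq_nonneg (t + 1)]
  have hneg : 1 + -t + (-t) ^ 2 / 2 ≤ exp (-t) := quadratic_le_exp_of_nonneg (neg_nonneg.2 ht)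
  refine le_of_mul_le_mul_right ?_ (exp_pos (-t))
  calc exp t * exp (-t) = 1 := by rw [← exp_add, add_neg_cancel, exp_zero]
    _ ≤ 1 + t ^ 4 / 4 := by linarith [show 0 ≤ t ^ 4 by positivity]
    _ = (1 + t + t ^ 2 / 2) * (1 + -t + (-t) ^ 2 / 2) := by ring
    _ ≤ (1 + t + t ^ 2 / 2) * exp (-t) := by gcongr

lemma abs_exp_sub_one_add_le_of_nonpos {t : ℝ} (ht : t ≤ 0) :
    |exp t - (1 + t)| ≤ t ^ 2 / 2 := by
  have hlower : t + 1 ≤ exp t := add_one_le_exp t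
  have hupper : exp t ≤ 1 + t + t ^ 2 / 2 := exp_le_quadratic_of_nonpos ht
  rw [abs_le]
  constructor <;> linarith [sq_nonneg t]

lemma tendsto_exp_mul_sub_one_add_div_sq (a : ℝ) :
    Tendsto (fun u : ℝ => (exp (u * a) - (1 + u * a)) / u ^ 2) (𝓝[≠] 0) (𝓝 (a ^ 2 / 2)) := by
  have hmul : Tendsto (fun u : ℝ => u * a) (𝓝 0) (𝓝 0) :=
    Continuous.tendsto' (by fun_prop) 0 0 (zero_mul a)
  have hbigO : (fun u : ℝ => (u * a) ^ 2) =O[𝓝 0] (fun u => u ^ 2) := by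
    simpa only [mul_pow, mul_comm] using
      (Asymptotics.isBigO_refl (fun u : ℝ => u ^ 2) (𝓝 0)).const_mul_left (a ^ 2)
  have hremainder : Tendsto
      (fun u : ℝ => (exp (u * a) - ∑ i ∈ Finset.range 3, (u * a) ^ i / i.factorial) / u ^ 2)
      (𝓝[≠] 0) (𝓝 0) :=
    (((exp_sub_sum_range_succ_isLittleO_pow 2).comp_tendsto hmul).trans_isBigO
      hbigO).tendsto_div_nhds_zero.mono_left nhdsWithin_le_nhds
  have hadd := hremainder.add_const (a ^ 2 / 2)
  rw [zero_add] at hadd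
  refine hadd.congr' ?_
  filter_upwards [self_mem_nhdsWithin] with u hu
  have hu : u ≠ 0 := hu
  simp only [Finset.sum_range_succ, Finset.sum_range_zero, Nat.factorial]
  field_simp
  push_cast
  ring

lemma tendsto_one_sub_div_mul_sub_div {L : ℝ → ℝ} {m c : ℝ} {l : Filter ℝ} (hl : l ≤ 𝓝[≠] 0)
    (hL : Tendsto (fun r => (L r - (1 - r * m)) / r ^ 2) l (𝓝 c)) :
    Tendsto (fun r => ((1 - L r) / (r * L r) - m) / r) l (𝓝 (m ^ 2 - c)) := by
  set g : ℝ → ℝ := fun r => (L r - (1 - r * m)) / r ^ 2 with hg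
  have hne : ∀ᶠ r in l, r ≠ 0 := hl self_mem_nhdsWithin
  have hid : Tendsto (fun r : ℝ => r) l (𝓝 0) := hl.trans nhdsWithin_le_nhds
  have hL_one : Tendsto L l (𝓝 1) := by
    have hexpand : Tendsto (fun r => 1 - r * m + r ^ 2 * g r) l (𝓝 (1 - 0 * m + 0 ^ 2 * c)) :=
      ((hid.mul_const m).const_sub 1).add ((hid.pow 2).mul hL)
    rw [show 1 - 0 * m + 0 ^ 2 * c = 1 by ring] at hexpand
    refine hexpand.congr' (hne.mono fun r hr => ?_)
    simp only [hg]
    field_simp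
    ring
  have hquot : Tendsto (fun r => (m ^ 2 - (1 + r * m) * g r) / L r) l
      (𝓝 ((m ^ 2 - (1 + 0 * m) * c) / 1)) :=
    ((((hid.mul_const m).const_add 1).mul hL).const_sub (m ^ 2)).div hL_one one_ne_zero
  rw [show (m ^ 2 - (1 + 0 * m) * c) / 1 = m ^ 2 - c by ring] at hquot
  refine hquot.congr' ?_
  filter_upwards [hne, hL_one.eventually_ne one_ne_zero] with r hr hLr
  simp only [hg]
  field_simp
  ring

variable {Ω : Type*} [MeasurableSpace Ω] {μ : Measure Ω} {X : Ω → ℝ}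

lemma tendsto_integral_exp_mul_sub_one_add_div_sq (hX : AEMeasurable X μ) (hX0 : 0 ≤ᵐ[μ] X)
    (hX2 : Integrable (fun ω => X ω ^ 2) μ) :
    Tendsto (fun u : ℝ => ∫ ω, (exp (u * X ω) - (1 + u * X ω)) / u ^ 2 ∂μ) (𝓝[<] 0)
      (𝓝 ((∫ ω, X ω ^ 2 ∂μ) / 2)) := by
  rw [← integral_div]
  refine tendsto_integral_filter_of_dominated_convergence (fun ω => X ω ^ 2 / 2)
    (.of_forall fun u => AEMeasurable.aestronglyMeasurable (by fun_prop)) ?_ (hX2.div_const 2)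
    (ae_of_all _ fun ω => (tendsto_exp_mul_sub_one_add_div_sq (X ω)).mono_left (nhdsLT_le_nhdsNE 0))
  filter_upwards [self_mem_nhdsWithin] with u hu
  filter_upwards [hX0] with ω hω
  have hu : u < 0 := hu
  rw [norm_eq_abs, abs_div, abs_of_nonneg (sq_nonneg u), div_le_iff₀ (sq_pos_of_neg hu)]
  calc |exp (u * X ω) - (1 + u * X ω)| ≤ (u * X ω) ^ 2 / 2 :=
        abs_exp_sub_one_add_le_of_nonpos (mul_nonpos_of_nonpos_of_nonneg hu.le hω)
    _ = X ω ^ 2 / 2 * u ^ 2 := by ring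

lemma integrable_exp_mul_of_nonpos_of_nonneg [IsFiniteMeasure μ] (hX : AEMeasurable X μ)
    (hX0 : 0 ≤ᵐ[μ] X) {u : ℝ} (hu : u ≤ 0) : Integrable (fun ω => exp (u * X ω)) μ := by
  simpa only [Pi.neg_apply, neg_mul_neg] using integrable_exp_mul_of_le (-u) 0 (neg_nonneg.2 hu)
    hX.neg (hX0.mono fun _ hω => neg_nonpos.2 hω)

lemma tendsto_mgf_sub_div_sq [IsFiniteMeasure μ] (hX : MemLp X 2 μ) (hX0 : 0 ≤ᵐ[μ] X) :
    Tendsto (fun u : ℝ => (mgf X μ u - (μ.real Set.univ + u * μ[X])) / u ^ 2) (𝓝[<] 0)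
      (𝓝 (μ[X ^ 2] / 2)) := by
  refine (tendsto_integral_exp_mul_sub_one_add_div_sq hX.aemeasurable hX0
    hX.integrable_sq).congr' ?_
  filter_upwards [self_mem_nhdsWithin] with u hu
  have hu : u < 0 := hu
  have hexp := integrable_exp_mul_of_nonpos_of_nonneg hX.aemeasurable hX0 hu.le
  have hlin : Integrable (fun ω => u * X ω) μ := (hX.integrable one_le_two).const_mul u
  have hone : Integrable (fun _ => (1 : ℝ)) μ := integrable_const 1
  have hadd : Integrable (fun ω => 1 + u * X ω) μ := hone.add hlin
  rw [integral_div, integral_sub hexp hadd, integral_add hone hlin,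
    integral_const_mul, integral_const, smul_eq_mul, mul_one, mgf]

end SecondOrderExpansion

section Resetting

open Filter Topology

variable {Ω : Type*} [MeasurableSpace Ω]

/-- The mean completion time `(1 - T̃(r)) / (r T̃(r))`, under Poissonian resetting at rate `r > 0`,
of a task of random duration `T`. The Laplace transform `T̃(r) = E[exp (-rT)]` is encoded as
`mgf T P (-r)`. For an exponential time `R` of rate `r` independent of `T` the value is
`E[min T R] / P(T ≤ R)`: mean length of an attempt times mean number of attempts. -/
noncomputable def meanResettingTime (T : Ω → ℝ) (P : Measure Ω) (r : ℝ) : ℝ :=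
  (1 - mgf T P (-r)) / (r * mgf T P (-r))

lemma meanResettingTime_const_add (x : ℝ) (S : Ω → ℝ) (P : Measure Ω) (r : ℝ) :
    meanResettingTime (fun ω => x + S ω) P r =
      (exp (r * x) - mgf S P (-r)) / (r * mgf S P (-r)) := by
  rw [meanResettingTime, mgf_const_add, ← mul_div_mul_left _ _ (exp_ne_zero (r * x))]
  have hcancel : exp (r * x) * exp (-r * x) = 1 := by
    rw [← exp_add, neg_mul, add_neg_cancel, exp_zero]
  congr 1
  · linear_combination -mgf S P (-r) * hcancel
  · linear_combination r * mgf S P (-r) * hcancel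

variable {P : Measure Ω} [IsProbabilityMeasure P] {T : Ω → ℝ}

lemma tendsto_meanResettingTime_sub_integral_div (hT : MemLp T 2 P) (hT0 : 0 ≤ᵐ[P] T) :
    Tendsto (fun r => (meanResettingTime T P r - P[T]) / r) (𝓝[>] 0)
      (𝓝 ((P[T] ^ 2 - Var[T; P]) / 2)) := by
  have hmgf : Tendsto (fun r => (mgf T P (-r) - (1 - r * P[T])) / r ^ 2) (𝓝[>] 0)
      (𝓝 (P[T ^ 2] / 2)) := by
    have hneg : Tendsto (fun r : ℝ => -r) (𝓝[>] 0) (𝓝[<] 0) := by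
      simpa only [neg_zero] using tendsto_neg_nhdsGT (a := (0 : ℝ))
    simpa only [Function.comp_def, probReal_univ, neg_mul, neg_sq, ← sub_eq_add_neg] using
      (tendsto_mgf_sub_div_sq hT hT0).comp hneg
  have hlimit : (P[T] ^ 2 - Var[T; P]) / 2 = P[T] ^ 2 - P[T ^ 2] / 2 := by
    rw [variance_eq_sub hT]
    ring
  rw [hlimit]
  exact tendsto_one_sub_div_mul_sub_div (nhdsGT_le_nhdsNE 0) hmgf

lemma eventually_meanResettingTime_lt_integral (hT : MemLp T 2 P) (hT0 : 0 ≤ᵐ[P] T)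
    (hvar : P[T] ^ 2 < Var[T; P]) : ∀ᶠ r in 𝓝[>] 0, meanResettingTime T P r < P[T] := by
  have hneg : (P[T] ^ 2 - Var[T; P]) / 2 < 0 := by linarith
  filter_upwards [(tendsto_meanResettingTime_sub_integral_div hT hT0).eventually_lt_const hneg,
    self_mem_nhdsWithin] with r hslope hr
  exact sub_neg.1 (neg_of_div_neg_left hslope (Set.mem_Ioi.1 hr).le)

end Resetting

/-- **Additive model: the variance condition makes resetting beneficial.**
If `Var(S) > (x + E[S])²` (equivalently `CV_S > 1 + x/E[S]`), then there exists a resetting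
rate `r > 0` with `(e^{rx} − S̃(r))/(r·S̃(r)) < x + E[S]`, where `S̃(u) = E[e^{-uS}]`. -/
theorem additive_variance_condition_beneficial
    {Ω : Type*} [MeasurableSpace Ω] {P : Measure Ω} [IsProbabilityMeasure P]
    (S : Ω → ℝ) (hSmeas : Measurable S) (hSnn : ∀ ω, 0 ≤ S ω)
    (hS1 : Integrable S P) (hS2 : Integrable (fun ω => S ω ^ 2) P)
    (x : ℝ) (hx : 0 < x)
    (hVar : variance S P > (x + ∫ ω, S ω ∂P) ^ 2)
    (Stilde : ℝ → ℝ)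
    (hSt : ∀ u : ℝ, Stilde u = ∫ ω, Real.exp (-(u * S ω)) ∂P) :
    ∃ r : ℝ, 0 < r ∧
      (Real.exp (r * x) - Stilde r) / (r * Stilde r) < x + ∫ ω, S ω ∂P := by
  have hS : MemLp S 2 P := (memLp_two_iff_integrable_sq hSmeas.aestronglyMeasurable).2 hS2
  have hT : MemLp (fun ω => x + S ω) 2 P := (memLp_const x).add hS
  have hT0 : 0 ≤ᵐ[P] fun ω => x + S ω := ae_of_all _ fun ω => add_nonneg hx.le (hSnn ω)
  have hmean : ∫ ω, (x + S ω) ∂P = x + ∫ ω, S ω ∂P := by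
    rw [integral_add (integrable_const x) hS1, integral_const, probReal_univ, one_smul]
  have hvar : Var[fun ω => x + S ω; P] = Var[S; P] :=
    variance_const_add hSmeas.aestronglyMeasurable x
  have hSt_mgf (r : ℝ) : Stilde r = mgf S P (-r) := by simp only [hSt, mgf, neg_mul]
  obtain ⟨r, hlt, hr⟩ := ((eventually_meanResettingTime_lt_integral hT hT0
    (by rwa [hmean, hvar])).and self_mem_nhdsWithin).exists
  refine ⟨r, hr, ?_⟩
  rwa [hSt_mgf, ← meanResettingTime_const_add, ← hmean]
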